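/- Let α, β > -1 and n ≥ 0. The n-th eigenvalue χ_{n,α} of the Sturm–Liouville operator L_c^{(α)}f = −d/dx[(1-x²)^{α+1} f'] + c²x²(1-x²)^α f on (−1,1) satisfies n(n+2α+1) ≤ χ_{n,α} ≤ n(n+2α+1) + c². -/

import Mathlib

open Real Set

/-- `χ` is an eigenvalue of the Sturm–Liouville operator
`L_c^{(α)} f = -d/dx[(1-x²)^{α+1} f'] + c² x² (1-x²)^α f` on `(-1,1)`, i.e. there is a
nontrivial bounded (twice differentiable) solution on `(-1,1)` of
`(1-x²) ψ'' - 2(α+1) x ψ' + (χ - c² x²) ψ = 0`. -/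
def IsGPSWFEigenvalue (c α χ : ℝ) : Prop :=
  ∃ ψ : ℝ → ℝ,
    (∃ x ∈ Ioo (-1 : ℝ) 1, ψ x ≠ 0) ∧
    (∀ x ∈ Ioo (-1 : ℝ) 1, DifferentiableAt ℝ ψ x) ∧
    (∀ x ∈ Ioo (-1 : ℝ) 1, DifferentiableAt ℝ (deriv ψ) x) ∧
    (∃ M : ℝ, ∀ x ∈ Ioo (-1 : ℝ) 1, |ψ x| ≤ M) ∧
    ∀ x ∈ Ioo (-1 : ℝ) 1,
      (1 - x ^ 2) * deriv (deriv ψ) x - 2 * (α + 1) * x * deriv ψ x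
        + (χ - c ^ 2 * x ^ 2) * ψ x = 0

open Filter Topology

noncomputable section

/-- The value at `t` of the power series with coefficients `a`. -/
def powSum (a : ℕ → ℝ) (t : ℝ) : ℝ := ∑' k, a k * t ^ k

/-- The coefficients of the termwise derivative of a power series. -/
def derivCoeff (a : ℕ → ℝ) (k : ℕ) : ℝ := (k + 1) * a (k + 1)

/-- The coefficients of a power series multiplied by its variable. -/
def shiftCoeff (a : ℕ → ℝ) : ℕ → ℝ
  | 0 => 0
  | k + 1 => a k

/-- The power series with coefficients `a p`, `p ∈ K`, have radius of convergence at least `2`,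
uniformly in `p ∈ K`. -/
def RadiusTwo {ι : Type*} (a : ι → ℕ → ℝ) (K : Set ι) : Prop :=
  ∀ r : ℝ, 0 < r → r < 2 → ∃ C : ℝ, ∀ p ∈ K, ∀ k, |a p k| * r ^ k ≤ C

section PowerSeries

variable {ι : Type*} {a : ι → ℕ → ℝ} {K : Set ι}

lemma RadiusTwo.derivCoeff (h : RadiusTwo a K) : RadiusTwo (fun p => derivCoeff (a p)) K := by
  intro r hr hr2
  obtain ⟨C, hC⟩ := h ((r + 2) / 2) (by linarith) (by linarith)
  generalize hR : (r + 2) / 2 = R at hC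
  have hR0 : 0 < R := by linarith
  have hlim : Tendsto (fun k : ℕ => (k : ℝ) ^ 1 * (r / R) ^ k) atTop (𝓝 0) :=
    tendsto_pow_const_mul_const_pow_of_abs_lt_one 1 (by
      rw [abs_of_pos (by positivity), div_lt_one (by positivity)]; linarith)
  obtain ⟨B, hB⟩ := hlim.bddAbove_range
  refine ⟨C * (B / r), fun p hp k => ?_⟩
  have h1 := hC p hp (k + 1)
  have h2 : ((k + 1 : ℕ) : ℝ) ^ 1 * (r / R) ^ (k + 1) ≤ B := hB ⟨k + 1, rfl⟩
  have : |_root_.derivCoeff (a p) k| * r ^ k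
      = (|a p (k + 1)| * R ^ (k + 1)) * ((((k + 1 : ℕ) : ℝ) ^ 1 * (r / R) ^ (k + 1)) / r) := by
    rw [_root_.derivCoeff, abs_mul, abs_of_nonneg (by positivity : (0 : ℝ) ≤ k + 1)]
    push_cast
    rw [div_pow]
    field_simp
    ring
  rw [this]
  have hC0 : 0 ≤ C := le_trans (by positivity) h1
  gcongr

lemma RadiusTwo.exists_bound (h : RadiusTwo a K) {r : ℝ} (hr0 : 0 < r) (hr : r < 2) :
    ∃ b : ℕ → ℝ, Summable b ∧ ∀ p ∈ K, ∀ t : ℝ, |t| ≤ r → ∀ k, ‖a p k * t ^ k‖ ≤ b k := by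
  obtain ⟨C, hC⟩ := h ((r + 2) / 2) (by linarith) (by linarith)
  generalize hR : (r + 2) / 2 = R at hC
  have hR0 : 0 < R := by linarith
  refine ⟨fun k => C * (r / R) ^ k, ?_, fun p hp t ht k => ?_⟩
  · exact (summable_geometric_of_lt_one (by positivity)
      (by rw [div_lt_one hR0]; linarith)).mul_left C
  · have h1 := hC p hp k
    have hC0 : 0 ≤ C := le_trans (by positivity) h1
    calc ‖a p k * t ^ k‖ = |a p k| * |t| ^ k := by
          rw [Real.norm_eq_abs, abs_mul, abs_pow]
      _ ≤ |a p k| * r ^ k := by gcongr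
      _ = (|a p k| * R ^ k) * (r / R) ^ k := by rw [div_pow]; field_simp
      _ ≤ C * (r / R) ^ k := by gcongr

lemma RadiusTwo.hasSum (h : RadiusTwo a K) {p : ι} (hp : p ∈ K) {t : ℝ} (ht : |t| < 2) :
    HasSum (fun k => a p k * t ^ k) (powSum (a p) t) := by
  obtain ⟨b, hb, hab⟩ := h.exists_bound (r := (|t| + 2) / 2)
    (by positivity) (by linarith)
  exact (Summable.of_norm_bounded hb
    (hab p hp t (by linarith))).hasSum

lemma RadiusTwo.hasDerivAt (h : RadiusTwo a K) {p : ι} (hp : p ∈ K) {t : ℝ} (ht : |t| < 2) :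
    HasDerivAt (powSum (a p)) (powSum (_root_.derivCoeff (a p)) t) t := by
  obtain ⟨r, hr1, hr2⟩ := exists_between ht
  have hr0 : 0 < r := lt_of_le_of_lt (abs_nonneg t) hr1
  obtain ⟨b, hb, hab⟩ := h.derivCoeff.exists_bound hr0 hr2
  have key : HasDerivAt (fun z => ∑' k, a p (k + 1) * z ^ (k + 1))
      (∑' k, _root_.derivCoeff (a p) k * t ^ k) t := by
    refine hasDerivAt_tsum_of_isPreconnected
      (g := fun k z => a p (k + 1) * z ^ (k + 1))
      (g' := fun k z => _root_.derivCoeff (a p) k * z ^ k) (t := Ioo (-r) r) (y₀ := 0) hb isOpen_Ioo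
      isPreconnected_Ioo (fun k y _ => ?_) (fun k y hy => ?_) ⟨by linarith, hr0⟩ ?_
      (abs_lt.1 hr1)
    · have := (hasDerivAt_pow (k + 1) y).const_mul (a p (k + 1))
      convert! this using 1
      rw [_root_.derivCoeff]
      push_cast
      ring
    · exact hab p hp y (abs_le.2 ⟨hy.1.le, hy.2.le⟩) k
    · simp [summable_zero]
  refine (key.const_add (a p 0)).congr_of_eventuallyEq ?_
  have : ∀ᶠ z in 𝓝 t, |z| < 2 := (continuous_abs.tendsto t).eventually_lt_const ht
  filter_upwards [this] with z hz
  rw [powSum, (h.hasSum hp hz).summable.tsum_eq_zero_add]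
  simp

lemma hasSum_shiftCoeff {a : ℕ → ℝ} {t u : ℝ} (h : HasSum (fun k => a k * t ^ k) u) :
    HasSum (fun k => shiftCoeff a k * t ^ k) (t * u) := by
  rw [← hasSum_nat_add_iff' 1]
  simp only [Finset.range_one, Finset.sum_singleton, shiftCoeff, zero_mul, sub_zero]
  exact (h.mul_left t).congr_fun fun k => by ring

lemma RadiusTwo.continuousOn [TopologicalSpace ι] (h : RadiusTwo a K)
    (ha : ∀ k, Continuous fun p => a p k) :
    ContinuousOn (fun z : ℝ × ι => powSum (a z.2) z.1) (Icc 0 1 ×ˢ K) := by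
  obtain ⟨b, hb, hab⟩ := h.exists_bound one_pos one_lt_two
  refine continuousOn_tsum (u := b) (fun k => ?_) hb (fun k z hz => ?_)
  · have := ha k
    fun_prop
  · exact hab z.2 hz.2 z.1 (abs_le.2 ⟨by linarith [hz.1.1], hz.1.2⟩) k

end PowerSeries

/-- The coefficients, shifted by two places, of the power series in `1 - x` of the solution that is
regular at `x = 1`, for the parameters `p = (χ, c²)`. -/
def regCoeffAux (α : ℝ) (p : ℝ × ℝ) : ℕ → ℝ
  | 0 => 0
  | 1 => 0
  | 2 => 1
  | k + 3 => ((k * (k + 2 * α + 1) - p.1 + p.2) * regCoeffAux α p (k + 2)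
      - 2 * p.2 * regCoeffAux α p (k + 1) + p.2 * regCoeffAux α p k)
      / (2 * (k + 1) * (k + α + 1))

/-- The coefficients of the power series in `1 - x` of the solution that is regular at `x = 1`. -/
def regCoeff (α : ℝ) (p : ℝ × ℝ) (k : ℕ) : ℝ := regCoeffAux α p (k + 2)

lemma regCoeffAux_succ {α : ℝ} (hα : -1 < α) (p : ℝ × ℝ) (k : ℕ) :
    2 * (k + 1) * (k + α + 1) * regCoeffAux α p (k + 3) =
      (k * (k + 2 * α + 1) - p.1 + p.2) * regCoeffAux α p (k + 2)
      - 2 * p.2 * regCoeffAux α p (k + 1) + p.2 * regCoeffAux α p k := by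
  have hk : (0 : ℝ) ≤ k := Nat.cast_nonneg k
  have h1 : (k : ℝ) + α + 1 ≠ 0 := by linarith
  rw [regCoeffAux]
  field_simp

lemma continuous_regCoeffAux (α : ℝ) (k : ℕ) : Continuous fun p => regCoeffAux α p k := by
  induction k using Nat.strong_induction_on with
  | _ k ih =>
    match k, ih with
    | 0, _ => simpa only [regCoeffAux] using continuous_const
    | 1, _ => simpa only [regCoeffAux] using continuous_const
    | 2, _ => simpa only [regCoeffAux] using continuous_const
    | k + 3, ih =>
      have h1 := ih k (by omega)
      have h2 := ih (k + 1) (by omega)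
      have h3 := ih (k + 2) (by omega)
      simp only [regCoeffAux]
      fun_prop

lemma continuous_regCoeff (α : ℝ) (k : ℕ) : Continuous fun p => regCoeff α p k :=
  continuous_regCoeffAux α (k + 2)

lemma radiusTwo_regCoeff {α : ℝ} (hα : -1 < α) {K : Set (ℝ × ℝ)} (hK : IsCompact K) :
    RadiusTwo (regCoeff α) K := by
  intro r hr0 hr2
  obtain ⟨A, hA⟩ := hK.exists_bound_of_continuousOn (continuous_fst.continuousOn)
  obtain ⟨B, hB⟩ := hK.exists_bound_of_continuousOn (continuous_snd.continuousOn)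
  have hev : ∀ᶠ x : ℝ in atTop, (x * (x + 2 * α + 1) + |A| + |B|) * r + 2 * |B| * r ^ 2
      + |B| * r ^ 3 ≤ 2 * (x + 1) * (x + α + 1) := by
    have h1 : Tendsto (fun x : ℝ => (2 - r) * x - (2 * |α| + 1) * r + 2 * α + 4) atTop atTop := by
      simp only [sub_eq_add_neg, add_assoc]
      exact tendsto_atTop_add_const_right _ _ (tendsto_id.const_mul_atTop (by linarith))
    filter_upwards [h1.eventually_ge_atTop ((|A| + |B|) * r + 2 * |B| * r ^ 2 + |B| * r ^ 3),
      eventually_ge_atTop 1] with x hx hx1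
    have h2 : x * α * r ≤ x * |α| * r := by gcongr; exact le_abs_self α
    have h3 : 0 ≤ (|A| + |B|) * r + 2 * |B| * r ^ 2 + |B| * r ^ 3 := by positivity
    nlinarith
  obtain ⟨N, hN⟩ := (tendsto_natCast_atTop_atTop.eventually hev).exists_forall_of_atTop
  have hinit : ∀ k, ∃ C, ∀ p ∈ K, |regCoeffAux α p k| * r ^ k ≤ C := fun k => by
    obtain ⟨C, hC⟩ := hK.exists_bound_of_continuousOn (continuous_regCoeffAux α k).continuousOn
    exact ⟨C * r ^ k, fun p hp => by gcongr; exact hC p hp⟩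
  choose C hC using hinit
  set D := ∑ k ∈ Finset.range (N + 3), |C k| with hD
  have hmain : ∀ p ∈ K, ∀ k, |regCoeffAux α p k| * r ^ k ≤ D := by
    intro p hp k
    induction k using Nat.strong_induction_on with
    | _ k ih =>
      rcases lt_or_ge k (N + 3) with hk | hk
      · exact ((hC k p hp).trans (le_abs_self _)).trans
          (Finset.single_le_sum (f := fun k => |C k|) (fun _ _ => abs_nonneg _)
            (Finset.mem_range.2 hk))
      · obtain ⟨m, rfl⟩ : ∃ m, k = m + 3 := ⟨k - 3, by omega⟩
        have hm := hN m (by omega)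
        have h0 := ih m (by omega)
        have h1 := ih (m + 1) (by omega)
        have h2 := ih (m + 2) (by omega)
        have hm0 : (0 : ℝ) ≤ m := Nat.cast_nonneg m
        have hden : (0 : ℝ) < 2 * (m + 1) * (m + α + 1) := by
          have : (0 : ℝ) < m + α + 1 := by linarith
          positivity
        have hrec := congrArg abs (regCoeffAux_succ hα p m)
        rw [abs_mul, abs_of_pos hden] at hrec
        have hp1 : |p.1| ≤ |A| := (hA p hp).trans (le_abs_self A)
        have hp2 : |p.2| ≤ |B| := (hB p hp).trans (le_abs_self B)
        have hm2 : |(m : ℝ) * (m + 2 * α + 1) - p.1 + p.2| ≤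
            m * (m + 2 * α + 1) + |A| + |B| := by
          have : (0 : ℝ) ≤ m * (m + 2 * α + 1) := by
            rcases Nat.eq_zero_or_pos m with h | h
            · simp [h]
            · have : (1 : ℝ) ≤ m := by exact_mod_cast h
              apply mul_nonneg <;> linarith
          calc _ ≤ |(m : ℝ) * (m + 2 * α + 1) - p.1| + |p.2| := abs_add_le _ _
            _ ≤ |(m : ℝ) * (m + 2 * α + 1)| + |p.1| + |p.2| := by gcongr; exact abs_sub _ _
            _ ≤ _ := by rw [abs_of_nonneg this]; gcongr
        have hD0 : 0 ≤ D := Finset.sum_nonneg fun _ _ => abs_nonneg _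
        refine le_of_mul_le_mul_left ?_ hden
        calc 2 * ((m : ℝ) + 1) * (m + α + 1) * (|regCoeffAux α p (m + 3)| * r ^ (m + 3))
            = (2 * ((m : ℝ) + 1) * (m + α + 1) * |regCoeffAux α p (m + 3)|) * r ^ (m + 3) := by ring
          _ ≤ (|(m : ℝ) * (m + 2 * α + 1) - p.1 + p.2| * |regCoeffAux α p (m + 2)|
              + 2 * |p.2| * |regCoeffAux α p (m + 1)|
              + |p.2| * |regCoeffAux α p m|) * r ^ (m + 3) := by
            rw [hrec]
            gcongr
            refine (abs_add_le _ _).trans ?_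
            rw [abs_mul p.2]
            gcongr
            refine (abs_sub _ _).trans ?_
            rw [abs_mul, abs_mul, abs_mul, abs_two]
          _ = |(m : ℝ) * (m + 2 * α + 1) - p.1 + p.2| * (|regCoeffAux α p (m + 2)| * r ^ (m + 2)) * r
              + 2 * |p.2| * (|regCoeffAux α p (m + 1)| * r ^ (m + 1)) * r ^ 2
              + |p.2| * (|regCoeffAux α p m| * r ^ m) * r ^ 3 := by ring
          _ ≤ (m * (m + 2 * α + 1) + |A| + |B|) * D * r + 2 * |B| * D * r ^ 2
              + |B| * D * r ^ 3 := by
            gcongr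
            exact (abs_nonneg _).trans hm2
          _ = ((m * (m + 2 * α + 1) + |A| + |B|) * r + 2 * |B| * r ^ 2 + |B| * r ^ 3) * D := by
            ring
          _ ≤ _ := by gcongr
  refine ⟨D / r ^ 2, fun p hp k => ?_⟩
  rw [le_div_iff₀ (by positivity), mul_assoc, ← pow_add]
  exact hmain p hp (k + 2)

/-- The solution that is regular at `x = 1`, normalised to be `1` there, as a function of
`t = 1 - x`, for the parameters `p = (χ, c²)`. -/
def reg (α : ℝ) (p : ℝ × ℝ) : ℝ → ℝ := powSum (regCoeff α p)

/-- The derivative of `reg`. -/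
def reg' (α : ℝ) (p : ℝ × ℝ) : ℝ → ℝ := powSum (derivCoeff (regCoeff α p))

/-- The second derivative of `reg`. -/
def reg'' (α : ℝ) (p : ℝ × ℝ) : ℝ → ℝ := powSum (derivCoeff (derivCoeff (regCoeff α p)))

lemma hasDerivAt_reg {α : ℝ} (hα : -1 < α) (p : ℝ × ℝ) {t : ℝ} (ht : |t| < 2) :
    HasDerivAt (reg α p) (reg' α p t) t :=
  (radiusTwo_regCoeff hα (isCompact_singleton (x := p))).hasDerivAt rfl ht

lemma hasDerivAt_reg' {α : ℝ} (hα : -1 < α) (p : ℝ × ℝ) {t : ℝ} (ht : |t| < 2) :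
    HasDerivAt (reg' α p) (reg'' α p t) t :=
  (radiusTwo_regCoeff hα (isCompact_singleton (x := p))).derivCoeff.hasDerivAt rfl ht

lemma reg_zero (α : ℝ) (p : ℝ × ℝ) : reg α p 0 = 1 := by
  rw [reg, powSum, tsum_eq_single 0 (fun k hk => by simp [hk])]
  simp [regCoeff, regCoeffAux]

/-- The differential equation of `reg` in the variable `t = 1 - x`. -/
lemma reg_ode {α : ℝ} (hα : -1 < α) (p : ℝ × ℝ) {t : ℝ} (ht : |t| < 2) :
    t * (2 - t) * reg'' α p t + 2 * (α + 1) * (1 - t) * reg' α p t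
      + (p.1 - p.2 * (1 - t) ^ 2) * reg α p t = 0 := by
  have hR := radiusTwo_regCoeff hα (isCompact_singleton (x := p))
  have h0 : HasSum _ (reg α p t) := hR.hasSum rfl ht
  have h1 : HasSum _ (reg' α p t) := hR.derivCoeff.hasSum rfl ht
  have h2 : HasSum _ (reg'' α p t) := hR.derivCoeff.derivCoeff.hasSum rfl ht
  have h0s := hasSum_shiftCoeff h0
  have h1s := hasSum_shiftCoeff h1
  have h2s := hasSum_shiftCoeff h2
  have h0ss := hasSum_shiftCoeff h0s
  have h2ss := hasSum_shiftCoeff h2s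
  have key := ((((((h2s.mul_left 2).sub h2ss).add (h1.mul_left (2 * (α + 1)))).sub
    (h1s.mul_left (2 * (α + 1)))).add (h0.mul_left (p.1 - p.2))).add
    (h0s.mul_left (2 * p.2))).sub (h0ss.mul_left p.2)
  have hz : HasSum (fun _ : ℕ => (0 : ℝ)) 0 := hasSum_zero
  have := key.unique (hz.congr_fun fun k => ?_)
  · linear_combination this
  · match k with
    | 0 =>
      have := regCoeffAux_succ hα p 0
      simp only [shiftCoeff, derivCoeff, regCoeff, regCoeffAux] at this ⊢
      push_cast at this ⊢
      linear_combination this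
    | 1 =>
      have := regCoeffAux_succ hα p 1
      simp only [shiftCoeff, derivCoeff, regCoeff] at this ⊢
      rw [show regCoeffAux α p 1 = 0 from rfl] at this
      push_cast at this ⊢
      linear_combination t * this
    | k + 2 =>
      have := regCoeffAux_succ hα p (k + 2)
      simp only [shiftCoeff, derivCoeff, regCoeff] at this ⊢
      push_cast at this ⊢
      linear_combination t ^ (k + 2) * this

lemma continuousOn_Icc_prod_univ {f : ℝ × (ℝ × ℝ) → ℝ}
    (h : ∀ K : Set (ℝ × ℝ), IsCompact K → ContinuousOn f (Icc 0 1 ×ˢ K)) :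
    ContinuousOn f (Icc 0 1 ×ˢ univ) := by
  rintro ⟨t, p⟩ ⟨ht, -⟩
  have hB := isCompact_closedBall p (1 : ℝ)
  refine ((h _ hB) (t, p) ⟨ht, Metric.mem_closedBall_self zero_le_one⟩).mono_of_mem_nhdsWithin ?_
  rw [nhdsWithin_prod_eq]
  exact prod_mem_prod self_mem_nhdsWithin
    (mem_nhdsWithin_of_mem_nhds (Metric.closedBall_mem_nhds p one_pos))

lemma continuousOn_reg {α : ℝ} (hα : -1 < α) :
    ContinuousOn (fun z : ℝ × (ℝ × ℝ) => reg α z.2 z.1) (Icc 0 1 ×ˢ univ) :=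
  continuousOn_Icc_prod_univ fun _ hK =>
    (radiusTwo_regCoeff hα hK).continuousOn (continuous_regCoeff α)

lemma continuousOn_reg' {α : ℝ} (hα : -1 < α) :
    ContinuousOn (fun z : ℝ × (ℝ × ℝ) => reg' α z.2 z.1) (Icc 0 1 ×ˢ univ) :=
  continuousOn_Icc_prod_univ fun _ hK =>
    (radiusTwo_regCoeff hα hK).derivCoeff.continuousOn
      fun k => (continuous_regCoeff α (k + 1)).const_mul _

/-- `v`, with first and second derivatives `v'` and `v''`, solves on `(0, 2)` the differential
equation for the parameters `p = (χ, c²)`, in the variable `t = 1 - x`. -/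
def IsSol (α : ℝ) (p : ℝ × ℝ) (v v' v'' : ℝ → ℝ) : Prop :=
  ∀ t ∈ Ioo (0 : ℝ) 2, HasDerivAt v (v' t) t ∧ HasDerivAt v' (v'' t) t ∧
    t * (2 - t) * v'' t + 2 * (α + 1) * (1 - t) * v' t + (p.1 - p.2 * (1 - t) ^ 2) * v t = 0

lemma isSol_reg {α : ℝ} (hα : -1 < α) (p : ℝ × ℝ) :
    IsSol α p (reg α p) (reg' α p) (reg'' α p) := by
  intro t ht
  have h : |t| < 2 := abs_lt.2 ⟨by linarith [ht.1], ht.2⟩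
  exact ⟨hasDerivAt_reg hα p h, hasDerivAt_reg' hα p h, reg_ode hα p h⟩

section Solutions

variable {α : ℝ} {p : ℝ × ℝ} {v v' v'' w w' w'' : ℝ → ℝ}

lemma IsSol.reflect (h : IsSol α p v v' v'') :
    IsSol α p (fun t => v (2 - t)) (fun t => -v' (2 - t)) (fun t => v'' (2 - t)) := by
  intro t ht
  obtain ⟨h1, h2, h3⟩ := h (2 - t) ⟨by linarith [ht.2], by linarith [ht.1]⟩
  refine ⟨?_, ?_, by linear_combination h3⟩
  · simpa using h1.comp_const_sub 2 t
  · exact (h2.comp_const_sub 2 t).neg.congr_deriv (neg_neg _)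

lemma IsSol.add (h : IsSol α p v v' v'') (hw : IsSol α p w w' w'') (r : ℝ) :
    IsSol α p (fun t => v t + r * w t) (fun t => v' t + r * w' t)
      (fun t => v'' t + r * w'' t) := by
  intro t ht
  obtain ⟨h1, h2, h3⟩ := h t ht
  obtain ⟨k1, k2, k3⟩ := hw t ht
  exact ⟨h1.add (k1.const_mul r), h2.add (k2.const_mul r), by linear_combination h3 + r * k3⟩

lemma IsSol.neg (h : IsSol α p v v' v'') :
    IsSol α p (fun t => -v t) (fun t => -v' t) (fun t => -v'' t) := by
  intro t ht
  obtain ⟨h1, h2, h3⟩ := h t ht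
  exact ⟨h1.neg, h2.neg, by linear_combination -h3⟩

lemma abs_potential_le (p : ℝ × ℝ) {t : ℝ} (ht : t ∈ Icc (0 : ℝ) 2) :
    |p.1 - p.2 * (1 - t) ^ 2| ≤ |p.1| + |p.2| := by
  obtain ⟨ht1, ht2⟩ := ht
  refine (abs_sub _ _).trans ?_
  rw [abs_mul p.2]
  gcongr
  exact mul_le_of_le_one_right (abs_nonneg _) (abs_le.2 ⟨by nlinarith, by nlinarith⟩)

lemma le_mul_exp_of_hasDerivAt {E E' G g : ℝ → ℝ}
    (hE : ∀ t ∈ Ico (1 : ℝ) 2, HasDerivAt E (E' t) t)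
    (hG : ∀ t ∈ Ico (1 : ℝ) 2, HasDerivAt G (g t) t)
    (hle : ∀ t ∈ Ico (1 : ℝ) 2, E' t ≤ g t * E t) {t : ℝ} (ht : t ∈ Ico (1 : ℝ) 2) :
    E t ≤ E 1 * exp (G t - G 1) := by
  have hd : ∀ t ∈ Ico (1 : ℝ) 2, HasDerivAt (fun t => E t * exp (-G t))
      (E' t * exp (-G t) + E t * (exp (-G t) * -g t)) t := fun t ht =>
    (hE t ht).mul (hG t ht).neg.exp
  have hanti : AntitoneOn (fun t => E t * exp (-G t)) (Ico 1 2) := by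
    refine antitoneOn_of_hasDerivWithinAt_nonpos (convex_Ico 1 2)
      (fun t ht => (hd t ht).continuousAt.continuousWithinAt)
      (fun t ht => (hd t (interior_subset ht)).hasDerivWithinAt) (fun t ht => ?_)
    have := hle t (interior_subset ht)
    have h2 := exp_pos (-G t)
    nlinarith
  have := hanti ⟨le_rfl, one_lt_two⟩ ht ht.1
  simp only at this
  calc E t = E t * exp (-G t) * exp (G t) := by
        rw [mul_assoc, ← Real.exp_add]; simp
    _ ≤ E 1 * exp (-G 1) * exp (G t) := by gcongr
    _ = _ := by rw [mul_assoc, ← Real.exp_add]; ring_nf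

lemma IsSol.eq_zero_Ico (h : IsSol α p v v' v'') (h0 : v 1 = 0) (h1 : v' 1 = 0) {t : ℝ}
    (ht : t ∈ Ico (1 : ℝ) 2) : v t = 0 := by
  have hsub : ∀ t ∈ Ico (1 : ℝ) 2, t ∈ Ioo (0 : ℝ) 2 := fun t ht => ⟨by linarith [ht.1], ht.2⟩
  set C := 1 + 4 * |α + 1| + |p.1| + |p.2| with hC
  have key := le_mul_exp_of_hasDerivAt (E := fun t => v t ^ 2 + v' t ^ 2)
    (E' := fun t => 2 * v t * v' t + 2 * v' t * v'' t) (G := fun t => -C * log (2 - t))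
    (g := fun t => C / (2 - t)) (fun t ht => ?_) (fun t ht => ?_) (fun t ht => ?_) ht
  · simp only [h0, h1] at key
    nlinarith [sq_nonneg (v t), sq_nonneg (v' t)]
  · obtain ⟨k1, k2, -⟩ := h t (hsub t ht)
    refine ((k1.pow 2).add (k2.pow 2)).congr_deriv ?_
    simp
  · have h2 : 2 - t ≠ 0 := by linarith [ht.2]
    have := ((((hasDerivAt_id t).const_sub 2).log h2).const_mul (-C))
    refine this.congr_deriv ?_
    simp; ring
  · obtain ⟨-, -, k3⟩ := h t (hsub t ht)
    obtain ⟨ht1, ht2⟩ := ht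
    have hpos : 0 < 2 - t := by linarith
    have hden : 0 < t * (2 - t) := by positivity
    have hv'' : v'' t = -(2 * (α + 1) * (1 - t) * v' t + (p.1 - p.2 * (1 - t) ^ 2) * v t)
        / (t * (2 - t)) := by
      rw [eq_div_iff hden.ne']; linear_combination k3
    have hb1 : |(α + 1) * (1 - t)| ≤ |α + 1| := by
      rw [abs_mul]
      exact mul_le_of_le_one_right (abs_nonneg _) (abs_le.2 ⟨by linarith, by linarith⟩)
    have hq : |p.1 - p.2 * (1 - t) ^ 2| ≤ |p.1| + |p.2| :=
      abs_potential_le p ⟨by linarith, ht2.le⟩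
    have e1 : 2 * |v t * v' t| ≤ v t ^ 2 + v' t ^ 2 := by
      rw [abs_mul, ← sq_abs (v t), ← sq_abs (v' t)]; nlinarith [sq_nonneg (|v t| - |v' t|)]
    have e2 : 2 * v' t * (-(2 * (α + 1) * (1 - t) * v' t + (p.1 - p.2 * (1 - t) ^ 2) * v t))
        ≤ (4 * |α + 1| + (|p.1| + |p.2|)) * (v t ^ 2 + v' t ^ 2) := by
      have a1 : -((α + 1) * (1 - t)) * v' t ^ 2 ≤ |α + 1| * v' t ^ 2 := by
        gcongr
        exact (neg_le_abs _).trans hb1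
      have a2 : -(p.1 - p.2 * (1 - t) ^ 2) * (v t * v' t) ≤ (|p.1| + |p.2|) * |v t * v' t| := by
        refine (le_abs_self _).trans ?_
        rw [abs_mul, abs_neg]
        gcongr
      have a3 : 0 ≤ |α + 1| * v t ^ 2 := by positivity
      have a4 : (|p.1| + |p.2|) * (2 * |v t * v' t|)
          ≤ (|p.1| + |p.2|) * (v t ^ 2 + v' t ^ 2) := by gcongr
      nlinarith
    have e3 : 2 * v t * v' t ≤ (v t ^ 2 + v' t ^ 2) / (2 - t) := by
      rw [le_div_iff₀ hpos]
      have : 2 * v t * v' t ≤ 2 * |v t * v' t| := by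
        rw [mul_assoc]; gcongr; exact le_abs_self _
      nlinarith [abs_nonneg (v t * v' t)]
    have e4 : 2 * v' t * v'' t ≤ (4 * |α + 1| + (|p.1| + |p.2|)) * (v t ^ 2 + v' t ^ 2)
        / (2 - t) := by
      rw [hv'', ← mul_div_assoc]
      calc _ ≤ (4 * |α + 1| + (|p.1| + |p.2|)) * (v t ^ 2 + v' t ^ 2) / (t * (2 - t)) := by
            gcongr
        _ ≤ _ := by
            gcongr
            nlinarith
    calc _ ≤ _ := add_le_add e3 e4
      _ = _ := by rw [hC]; ring

lemma IsSol.eq_zero (h : IsSol α p v v' v'') (h0 : v 1 = 0) (h1 : v' 1 = 0) {t : ℝ}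
    (ht : t ∈ Ioo (0 : ℝ) 2) : v t = 0 := by
  rcases le_total 1 t with h' | h'
  · exact h.eq_zero_Ico h0 h1 ⟨h', ht.2⟩
  · have := h.reflect.eq_zero_Ico (t := 2 - t) (by norm_num [h0]) (by norm_num [h1])
      ⟨by linarith, by linarith [ht.1]⟩
    simpa using this

lemma hasDerivAt_weight (α : ℝ) {t : ℝ} (ht : t ∈ Ioo (0 : ℝ) 2) :
    HasDerivAt (fun t : ℝ => (t * (2 - t)) ^ (α + 1))
      ((t * (2 - t)) ^ α * (2 * (α + 1) * (1 - t))) t := by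
  have hpos : 0 < t * (2 - t) := mul_pos ht.1 (by linarith [ht.2])
  have h1 : HasDerivAt (fun t : ℝ => t * (2 - t)) (1 * (2 - t) + t * (-1)) t :=
    (hasDerivAt_id t).mul ((hasDerivAt_id t).const_sub 2)
  refine (h1.rpow_const (p := α + 1) (Or.inl hpos.ne')).congr_deriv ?_
  rw [add_sub_cancel_right]
  ring

lemma weight_succ (α : ℝ) {t : ℝ} (ht : t ∈ Ioo (0 : ℝ) 2) :
    (t * (2 - t)) ^ (α + 1) = (t * (2 - t)) ^ α * (t * (2 - t)) := by
  have hpos : 0 < t * (2 - t) := mul_pos ht.1 (by linarith [ht.2])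
  rw [rpow_add_one hpos.ne']

lemma IsSol.hasDerivAt_weight_mul (h : IsSol α p v v' v'') {t : ℝ} (ht : t ∈ Ioo (0 : ℝ) 2) :
    HasDerivAt (fun t : ℝ => (t * (2 - t)) ^ (α + 1) * v' t)
      (-((t * (2 - t)) ^ α * (p.1 - p.2 * (1 - t) ^ 2) * v t)) t := by
  obtain ⟨-, h2, h3⟩ := h t ht
  refine ((hasDerivAt_weight α ht).mul h2).congr_deriv ?_
  rw [weight_succ α ht]
  linear_combination (t * (2 - t)) ^ α * h3

/-- The derivative of the weighted Wronskian of two solutions. -/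
lemma IsSol.hasDerivAt_wronskian {q : ℝ × ℝ} (h : IsSol α p v v' v'') (hw : IsSol α q w w' w'')
    {t : ℝ} (ht : t ∈ Ioo (0 : ℝ) 2) :
    HasDerivAt (fun t : ℝ => (t * (2 - t)) ^ (α + 1) * (v t * w' t - v' t * w t))
      (-((t * (2 - t)) ^ α * ((q.1 - p.1) - (q.2 - p.2) * (1 - t) ^ 2) * (v t * w t))) t := by
  have h1 := h.hasDerivAt_weight_mul ht
  have h2 := hw.hasDerivAt_weight_mul ht
  have := ((h t ht).1.mul h2).sub ((hw t ht).1.mul h1)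
  refine (this.congr_deriv ?_).congr_of_eventuallyEq (Eventually.of_forall fun t => ?_)
  · ring
  · simp only [Pi.sub_apply, Pi.mul_apply]; ring

lemma IsSol.bounded_of_neg (h : IsSol α p v v' v'') (hα : -1 < α) (hα0 : α < 0) :
    ∃ M, ∀ t ∈ Ico (1 : ℝ) 2, |v t| ≤ M := by
  have hsub : ∀ t ∈ Ico (1 : ℝ) 2, t ∈ Ioo (0 : ℝ) 2 := fun t ht => ⟨by linarith [ht.1], ht.2⟩
  set Q := |p.1| + |p.2| with hQ
  have hQ0 : 0 ≤ Q := by positivity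
  set P : ℝ → ℝ := fun t => (t * (2 - t)) ^ (α + 1) with hP
  set y : ℝ → ℝ := fun t => P t * v' t with hy
  set G : ℝ → ℝ := fun t => (2 - t) ^ (-α) / α - Q * ((2 - t) ^ (α + 1) / (α + 1)) with hG
  have hα1 : 0 < α + 1 := by linarith
  have key := fun t ht => le_mul_exp_of_hasDerivAt (E := fun t => v t ^ 2 + y t ^ 2)
    (E' := fun t => 2 * v t * v' t +
      2 * y t * (-((t * (2 - t)) ^ α * (p.1 - p.2 * (1 - t) ^ 2) * v t)))
    (G := G) (g := fun t => (2 - t) ^ (-(α + 1)) + Q * (2 - t) ^ α) (t := t)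
    (fun t ht => ?_) (fun t ht => ?_) (fun t ht => ?_) ht
  · refine ⟨√((v 1 ^ 2 + y 1 ^ 2) * exp (-G 1)), fun t ht => ?_⟩
    refine Real.abs_le_sqrt ?_
    have hG0 : G t ≤ 0 := by
      have h2 : 0 ≤ 2 - t := by linarith [ht.2]
      have h3 : (2 - t) ^ (-α) / α ≤ 0 := div_nonpos_of_nonneg_of_nonpos (by positivity) hα0.le
      have h4 : 0 ≤ Q * ((2 - t) ^ (α + 1) / (α + 1)) := by positivity
      simp only [hG]; linarith
    calc v t ^ 2 ≤ v t ^ 2 + y t ^ 2 := by nlinarith [sq_nonneg (y t)]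
      _ ≤ _ := key t ht
      _ ≤ _ := by gcongr; linarith
  · refine (((h t (hsub t ht)).1.pow 2).add
      ((h.hasDerivAt_weight_mul (hsub t ht)).pow 2)).congr_deriv ?_
    simp [hy, hP]
  · have h2 : 0 < 2 - t := by linarith [ht.2]
    have k1 := (((hasDerivAt_id t).const_sub 2).rpow_const (p := -α) (Or.inl h2.ne')).div_const α
    have k2 := ((((hasDerivAt_id t).const_sub 2).rpow_const (p := α + 1)
      (Or.inl h2.ne')).div_const (α + 1)).const_mul Q
    refine (k1.sub k2).congr_deriv ?_
    rw [add_sub_cancel_right, show -α - 1 = -(α + 1) by ring]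
    simp only [id]
    have : α ≠ 0 := hα0.ne
    field_simp
    ring
  · have htt := hsub t ht
    obtain ⟨ht1, ht2⟩ := ht
    have h2 : 0 < 2 - t := by linarith
    have hpos : 0 < t * (2 - t) := by positivity
    have hPt : 0 < P t := by positivity
    have hle : 2 - t ≤ t * (2 - t) := by nlinarith
    have hPinv : (P t)⁻¹ ≤ (2 - t) ^ (-(α + 1)) := by
      rw [hP, ← rpow_neg hpos.le]
      exact rpow_le_rpow_of_nonpos h2 hle (by linarith)
    have hwle : (t * (2 - t)) ^ α ≤ (2 - t) ^ α := rpow_le_rpow_of_nonpos h2 hle hα0.le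
    have hq : |p.1 - p.2 * (1 - t) ^ 2| ≤ Q :=
      abs_potential_le p ⟨by linarith, ht2.le⟩
    have hv' : v' t = y t * (P t)⁻¹ := by simp only [hy]; field_simp
    have e1 : 2 * |v t * y t| ≤ v t ^ 2 + y t ^ 2 := by
      rw [abs_mul, ← sq_abs (v t), ← sq_abs (y t)]; nlinarith [sq_nonneg (|v t| - |y t|)]
    calc 2 * v t * v' t + 2 * y t * (-((t * (2 - t)) ^ α * (p.1 - p.2 * (1 - t) ^ 2) * v t))
        = (P t)⁻¹ * (2 * (v t * y t))
          + (-(p.1 - p.2 * (1 - t) ^ 2) * (2 * (v t * y t))) * (t * (2 - t)) ^ α := by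
          rw [hv']; ring
      _ ≤ (P t)⁻¹ * (2 * |v t * y t|) + (Q * (2 * |v t * y t|)) * (t * (2 - t)) ^ α := by
          have : -(p.1 - p.2 * (1 - t) ^ 2) * (2 * (v t * y t)) ≤ Q * (2 * |v t * y t|) := by
            refine (le_abs_self _).trans ?_
            rw [abs_mul, abs_neg, abs_mul 2, abs_two]
            gcongr
          gcongr
          exact le_abs_self _
      _ ≤ (2 - t) ^ (-(α + 1)) * (v t ^ 2 + y t ^ 2)
          + (Q * (v t ^ 2 + y t ^ 2)) * (2 - t) ^ α := by gcongr
      _ = _ := by ring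

end Solutions

lemma IsSol.wronskian_reg_nonpos {α : ℝ} (hα : 0 ≤ α) {p : ℝ × ℝ} {v v' v'' : ℝ → ℝ}
    (h : IsSol α p v v' v'') {M : ℝ} (hM : ∀ t ∈ Ioo (0 : ℝ) 2, |v t| ≤ M) :
    reg α p 1 * v' 1 - reg' α p 1 * v 1 ≤ 0 := by
  have hα' : -1 < α := by linarith
  by_contra! hK
  set K := reg α p 1 * v' 1 - reg' α p 1 * v 1 with hKdef
  have hu := isSol_reg hα' p
  have hconst : ∀ t ∈ Ioo (0 : ℝ) 2,
      (t * (2 - t)) ^ (α + 1) * (reg α p t * v' t - reg' α p t * v t) = K := by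
    intro t ht
    have hd := fun t ht => hu.hasDerivAt_wronskian h (t := t) ht
    have := isOpen_Ioo.is_const_of_deriv_eq_zero isPreconnected_Ioo
      (fun t ht => (hd t ht).differentiableAt.differentiableWithinAt)
      (fun t ht => by rw [(hd t ht).deriv]; simp) ht (y := (1 : ℝ)) ⟨by norm_num, by norm_num⟩
    rw [this, hKdef]
    norm_num
  obtain ⟨δ, hδ0, hδ1, hδ⟩ : ∃ δ : ℝ, 0 < δ ∧ δ < 1 ∧ ∀ t ∈ Ioc 0 δ,
      1 / 2 ≤ reg α p t ∧ reg α p t ≤ 2 := by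
    have hc : ContinuousAt (reg α p) 0 := (hasDerivAt_reg hα' p (by norm_num)).continuousAt
    have : Icc (1 / 2 : ℝ) 2 ∈ 𝓝 (reg α p 0) := by
      rw [reg_zero]; exact Icc_mem_nhds (by norm_num) (by norm_num)
    obtain ⟨ε, hε, hball⟩ := Metric.mem_nhds_iff.1 (hc this)
    refine ⟨min (ε / 2) (1 / 2), by positivity, by
      have := min_le_right (ε / 2) (1 / 2 : ℝ); linarith, fun t ht => hball ?_⟩
    rw [Metric.mem_ball, dist_zero_right, Real.norm_eq_abs, abs_of_pos ht.1]
    have := ht.2.trans (min_le_left _ _)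
    linarith
  set g : ℝ → ℝ := fun t => v t / reg α p t - K / 8 * log t with hg
  have hmono : MonotoneOn g (Ioc 0 δ) := by
    have hd : ∀ t ∈ Ioc 0 δ, HasDerivAt g
        ((v' t * reg α p t - v t * reg' α p t) / reg α p t ^ 2 - K / 8 * t⁻¹) t := by
      intro t ht
      have htt : t ∈ Ioo (0 : ℝ) 2 := ⟨ht.1, by linarith [ht.2]⟩
      exact ((h t htt).1.div (hu t htt).1 (by linarith [(hδ t ht).1])).sub
        ((hasDerivAt_log ht.1.ne').const_mul _)
    refine monotoneOn_of_hasDerivWithinAt_nonneg (convex_Ioc 0 δ)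
      (fun t ht => (hd t ht).continuousAt.continuousWithinAt)
      (fun t ht => (hd t (interior_subset ht)).hasDerivWithinAt) (fun t ht => ?_)
    replace ht := interior_subset ht
    have htt : t ∈ Ioo (0 : ℝ) 2 := ⟨ht.1, by linarith [ht.2]⟩
    obtain ⟨hu1, hu2⟩ := hδ t ht
    have ht0 := ht.1
    have hb0 : 0 < t * (2 - t) := mul_pos ht.1 (by linarith [htt.2])
    have hP0 : 0 < (t * (2 - t)) ^ (α + 1) := by positivity
    have hP : (t * (2 - t)) ^ (α + 1) ≤ 2 * t := by
      calc (t * (2 - t)) ^ (α + 1) ≤ (t * (2 - t)) ^ (1 : ℝ) :=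
            rpow_le_rpow_of_exponent_ge hb0 (by nlinarith [sq_nonneg (t - 1)]) (by linarith)
        _ ≤ 2 * t := by rw [rpow_one]; nlinarith
    have hW : v' t * reg α p t - v t * reg' α p t = K / (t * (2 - t)) ^ (α + 1) := by
      rw [eq_div_iff hP0.ne', ← hconst t htt]; ring
    rw [hW, sub_nonneg, div_div]
    have hden : (t * (2 - t)) ^ (α + 1) * reg α p t ^ 2 ≤ 2 * t * 2 ^ 2 := by gcongr
    calc K / 8 * t⁻¹ = K / (2 * t * 2 ^ 2) := by field_simp; norm_num
      _ ≤ _ := by gcongr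
  have hlim : Tendsto (fun t => g δ + K / 8 * log t) (𝓝[>] 0) atBot :=
    tendsto_atBot_add_const_left _ _ (tendsto_log_nhdsGT_zero.const_mul_atBot (by positivity))
  obtain ⟨t, ht1, ht2⟩ := ((hlim.eventually_lt_atBot (-(2 * M))).and
    (Ioc_mem_nhdsGT hδ0)).exists
  have h1 := hmono ht2 ⟨hδ0, le_rfl⟩ ht2.2
  have h2 := hM t ⟨ht2.1, by linarith [ht2.2]⟩
  obtain ⟨hu1, -⟩ := hδ t ht2
  have h3 : -(2 * M) ≤ v t / reg α p t := by
    rw [le_div_iff₀ (by linarith)]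
    have := (abs_le.1 h2).1
    have hM0 : 0 ≤ M := (abs_nonneg _).trans h2
    nlinarith
  simp only [hg] at h1 ht1
  linarith

lemma IsSol.wronskian_reg {α : ℝ} (hα : 0 ≤ α) {p : ℝ × ℝ} {v v' v'' : ℝ → ℝ}
    (h : IsSol α p v v' v'') {M : ℝ} (hM : ∀ t ∈ Ioo (0 : ℝ) 2, |v t| ≤ M) :
    reg α p 1 * v' 1 = reg' α p 1 * v 1 := by
  have h1 := h.wronskian_reg_nonpos hα hM
  have h2 := h.neg.wronskian_reg_nonpos hα (M := M) (fun t ht => by simpa using hM t ht)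
  linarith

/-- There is a nontrivial bounded solution for the parameters `p = (χ, c²)`. -/
def HasBddSol (α : ℝ) (p : ℝ × ℝ) : Prop :=
  ∃ v v' v'' : ℝ → ℝ, IsSol α p v v' v'' ∧ (∃ t ∈ Ioo (0 : ℝ) 2, v t ≠ 0) ∧
    ∃ M, ∀ t ∈ Ioo (0 : ℝ) 2, |v t| ≤ M

lemma isGPSWFEigenvalue_iff_hasBddSol {c α χ : ℝ} :
    IsGPSWFEigenvalue c α χ ↔ HasBddSol α (χ, c ^ 2) := by
  have hmem : ∀ t : ℝ, t ∈ Ioo (0 : ℝ) 2 → 1 - t ∈ Ioo (-1 : ℝ) 1 := fun t ht =>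
    ⟨by linarith [ht.2], by linarith [ht.1]⟩
  have hmem' : ∀ t : ℝ, t ∈ Ioo (-1 : ℝ) 1 → 1 - t ∈ Ioo (0 : ℝ) 2 := fun t ht =>
    ⟨by linarith [ht.2], by linarith [ht.1]⟩
  constructor
  · rintro ⟨ψ, ⟨x, hx, hψx⟩, hd, hdd, ⟨M, hM⟩, hode⟩
    refine ⟨fun t => ψ (1 - t), fun t => -deriv ψ (1 - t), fun t => deriv (deriv ψ) (1 - t),
      fun t ht => ⟨?_, ?_, ?_⟩, ⟨1 - x, hmem' x hx, by simpa using hψx⟩,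
      M, fun t ht => hM _ (hmem t ht)⟩
    · exact (hd _ (hmem t ht)).hasDerivAt.comp_const_sub 1 t
    · exact ((hdd _ (hmem t ht)).hasDerivAt.comp_const_sub 1 t).neg.congr_deriv (neg_neg _)
    · linear_combination hode _ (hmem t ht)
  · rintro ⟨v, v', v'', h, ⟨t, ht, hvt⟩, M, hM⟩
    have hd : ∀ x ∈ Ioo (-1 : ℝ) 1, HasDerivAt (fun x => v (1 - x)) (-v' (1 - x)) x :=
      fun x hx => (h _ (hmem' x hx)).1.comp_const_sub 1 x
    have hdd : ∀ x ∈ Ioo (-1 : ℝ) 1, HasDerivAt (deriv fun x => v (1 - x)) (v'' (1 - x)) x := by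
      intro x hx
      refine (((h _ (hmem' x hx)).2.1.comp_const_sub 1 x).neg.congr_deriv
        (neg_neg _)).congr_of_eventuallyEq ?_
      filter_upwards [isOpen_Ioo.mem_nhds hx] with y hy
      exact (hd y hy).deriv
    refine ⟨fun x => v (1 - x), ⟨1 - t, hmem t ht, by simpa using hvt⟩,
      fun x hx => (hd x hx).differentiableAt, fun x hx => (hdd x hx).differentiableAt,
      ⟨M, fun x hx => hM _ (hmem' x hx)⟩, fun x hx => ?_⟩
    rw [(hdd x hx).deriv, (hd x hx).deriv]
    have := (h _ (hmem' x hx)).2.2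
    simp only at this
    linear_combination this

lemma exists_reg_ne_zero {α : ℝ} (hα : -1 < α) (p : ℝ × ℝ) : ∃ t ∈ Ioo (0 : ℝ) 2, reg α p t ≠ 0 := by
  have hc : ContinuousAt (reg α p) 0 := (hasDerivAt_reg hα p (by norm_num)).continuousAt
  have h1 : ∀ᶠ t in 𝓝[>] (0 : ℝ), reg α p t ≠ 0 :=
    (hc.eventually_ne (by rw [reg_zero]; norm_num)).filter_mono nhdsWithin_le_nhds
  obtain ⟨t, ht, ht'⟩ := (h1.and (Ioo_mem_nhdsGT two_pos)).exists
  exact ⟨t, ht', ht⟩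

lemma reg_one_ne_zero_or {α : ℝ} (hα : -1 < α) (p : ℝ × ℝ) : reg α p 1 ≠ 0 ∨ reg' α p 1 ≠ 0 := by
  by_contra! h
  obtain ⟨t, ht, hne⟩ := exists_reg_ne_zero hα p
  exact hne ((isSol_reg hα p).eq_zero h.1 h.2 ht)

lemma HasBddSol.reg_mul_reg'_eq_zero {α : ℝ} (hα : 0 ≤ α) {p : ℝ × ℝ} (h : HasBddSol α p) :
    reg α p 1 * reg' α p 1 = 0 := by
  obtain ⟨v, v', v'', h, ⟨t, ht, hvt⟩, M, hM⟩ := h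
  by_contra! hne
  have h1 := h.wronskian_reg hα hM
  have h2 := h.reflect.wronskian_reg hα (M := M)
    (fun t ht => hM _ ⟨by linarith [ht.2], by linarith [ht.1]⟩)
  norm_num at h2
  have h3 : reg α p 1 * v' 1 = 0 := by linarith
  have h4 : reg' α p 1 * v 1 = 0 := by linarith
  refine hvt (h.eq_zero ?_ ?_ ht)
  · exact (mul_eq_zero.1 h4).resolve_left (right_ne_zero_of_mul hne)
  · exact (mul_eq_zero.1 h3).resolve_left (left_ne_zero_of_mul hne)

lemma exists_bound_reg {α : ℝ} (hα : -1 < α) (p : ℝ × ℝ) :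
    ∃ M, ∀ t ∈ Icc (0 : ℝ) 1, |reg α p t| ≤ M ∧ |reg' α p t| ≤ M := by
  have h1 : ∀ t ∈ Icc (0 : ℝ) 1, |t| < 2 := fun t ht => abs_lt.2 ⟨by linarith [ht.1],
    by linarith [ht.2]⟩
  obtain ⟨M, hM⟩ := isCompact_Icc.exists_bound_of_continuousOn (f := reg α p)
    (fun t ht => (hasDerivAt_reg hα p (h1 t ht)).continuousAt.continuousWithinAt)
  obtain ⟨M', hM'⟩ := isCompact_Icc.exists_bound_of_continuousOn (f := reg' α p)
    (fun t ht => (hasDerivAt_reg' hα p (h1 t ht)).continuousAt.continuousWithinAt)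
  exact ⟨max M M', fun t ht => ⟨(hM t ht).trans (le_max_left _ _),
    (hM' t ht).trans (le_max_right _ _)⟩⟩

lemma exists_reg_symm {α : ℝ} (hα : -1 < α) {p : ℝ × ℝ} (h : reg α p 1 * reg' α p 1 = 0) :
    ∃ σ : ℝ, |σ| = 1 ∧ ∀ t ∈ Ioo (0 : ℝ) 2, reg α p (2 - t) = σ * reg α p t ∧
      reg' α p (2 - t) = -σ * reg' α p t := by
  have hu := isSol_reg hα p
  obtain ⟨σ, hσ, h0, h1⟩ : ∃ σ : ℝ, |σ| = 1 ∧ (1 - σ) * reg α p 1 = 0 ∧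
      (1 + σ) * reg' α p 1 = 0 := by
    rcases mul_eq_zero.1 h with h | h
    · exact ⟨-1, by simp, by simp [h], by simp⟩
    · exact ⟨1, by simp, by simp, by simp [h]⟩
  have hs := hu.reflect.add hu (-σ)
  have hz : ∀ t ∈ Ioo (0 : ℝ) 2, reg α p (2 - t) + -σ * reg α p t = 0 := fun t ht =>
    hs.eq_zero (by norm_num; linarith) (by norm_num; linarith) ht
  refine ⟨σ, hσ, fun t ht => ⟨by linarith [hz t ht], ?_⟩⟩
  have hd := (hs t ht).1
  have hd0 : HasDerivAt (fun t => reg α p (2 - t) + -σ * reg α p t) 0 t := by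
    refine (hasDerivAt_const t (0 : ℝ)).congr_of_eventuallyEq ?_
    filter_upwards [isOpen_Ioo.mem_nhds ht] with y hy
    exact hz y hy
  have := hd.unique hd0
  simp only at this
  linarith

lemma hasBddSol_of_bound {α : ℝ} (hα : -1 < α) {p : ℝ × ℝ} {M : ℝ}
    (hM : ∀ t ∈ Ico (1 : ℝ) 2, |reg α p t| ≤ M) : HasBddSol α p := by
  obtain ⟨M', hM'⟩ := exists_bound_reg hα p
  refine ⟨reg α p, reg' α p, reg'' α p, isSol_reg hα p, exists_reg_ne_zero hα p, max M M',
    fun t ht => ?_⟩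
  rcases le_total t 1 with h | h
  · exact (hM' t ⟨ht.1.le, h⟩).1.trans (le_max_right _ _)
  · exact (hM t ⟨h, ht.2⟩).trans (le_max_left _ _)

lemma hasBddSol_iff {α : ℝ} (hα : 0 ≤ α) {p : ℝ × ℝ} :
    HasBddSol α p ↔ reg α p 1 * reg' α p 1 = 0 := by
  refine ⟨HasBddSol.reg_mul_reg'_eq_zero hα, fun h => ?_⟩
  have hα' : -1 < α := by linarith
  obtain ⟨σ, hσ, hs⟩ := exists_reg_symm hα' h
  obtain ⟨M, hM⟩ := exists_bound_reg hα' p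
  refine hasBddSol_of_bound hα' (M := M) fun t ht => ?_
  have h1 := (hs (2 - t) ⟨by linarith [ht.2], by linarith [ht.1]⟩).1
  rw [sub_sub_cancel] at h1
  rw [h1, abs_mul, hσ, one_mul]
  exact (hM (2 - t) ⟨by linarith [ht.2], by linarith [ht.1]⟩).1

lemma hasBddSol_of_neg {α : ℝ} (hα : -1 < α) (hα0 : α < 0) (p : ℝ × ℝ) : HasBddSol α p := by
  obtain ⟨M, hM⟩ := (isSol_reg hα p).bounded_of_neg hα hα0
  exact hasBddSol_of_bound hα hM

lemma regCoeff_succ {α : ℝ} (hα : -1 < α) (χ : ℝ) (k : ℕ) :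
    2 * (k + 1) * (k + α + 1) * regCoeff α (χ, 0) (k + 1) =
      (k * (k + 2 * α + 1) - χ) * regCoeff α (χ, 0) k := by
  have := regCoeffAux_succ hα (χ, 0) k
  simp only [regCoeff] at this ⊢
  linear_combination this

lemma regCoeff_eq_zero {α : ℝ} (hα : -1 < α) (n : ℕ) {k : ℕ} (hk : n < k) :
    regCoeff α ((n : ℝ) * (n + 2 * α + 1), 0) k = 0 := by
  induction k, hk using Nat.le_induction with
  | base =>
    have := regCoeff_succ hα ((n : ℝ) * (n + 2 * α + 1)) n
    rw [sub_self, zero_mul] at this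
    have hn : (0 : ℝ) < n + α + 1 := by
      have : (0 : ℝ) ≤ n := Nat.cast_nonneg n
      linarith
    exact (mul_eq_zero.1 this).resolve_left (by positivity)
  | succ k hk ih =>
    have := regCoeff_succ hα ((n : ℝ) * (n + 2 * α + 1)) k
    rw [ih, mul_zero] at this
    have hn : (0 : ℝ) < k + α + 1 := by
      have : (0 : ℝ) ≤ k := Nat.cast_nonneg k
      linarith
    exact (mul_eq_zero.1 this).resolve_left (by positivity)

lemma hasBddSol_jacobi {α : ℝ} (hα : -1 < α) (n : ℕ) :
    HasBddSol α ((n : ℝ) * (n + 2 * α + 1), 0) := by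
  set p : ℝ × ℝ := ((n : ℝ) * (n + 2 * α + 1), 0) with hp
  have hpoly : reg α p = fun t => ∑ k ∈ Finset.range (n + 1), regCoeff α p k * t ^ k := by
    funext t
    refine tsum_eq_sum fun k hk => ?_
    rw [regCoeff_eq_zero hα n (by simpa [Nat.lt_succ_iff] using hk), zero_mul]
  obtain ⟨M, hM⟩ := isCompact_Icc.exists_bound_of_continuousOn (f := reg α p) (s := Icc 1 2)
    (by rw [hpoly]; fun_prop)
  exact hasBddSol_of_bound hα (M := M) fun t ht => hM t ⟨ht.1, ht.2.le⟩

lemma exists_eq_of_reg_mul_reg'_eq_zero {α χ : ℝ} (hα : 0 ≤ α)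
    (h : reg α (χ, 0) 1 * reg' α (χ, 0) 1 = 0) : ∃ n : ℕ, χ = n * (n + 2 * α + 1) := by
  have hα' : -1 < α := by linarith
  by_contra! hne
  set a := regCoeff α (χ, 0) with ha
  have hrec : ∀ k : ℕ, 2 * (k + 1) * (k + α + 1) * a (k + 1) = (k * (k + 2 * α + 1) - χ) * a k :=
    regCoeff_succ hα' χ
  have hane : ∀ k, a k ≠ 0 := by
    intro k
    induction k with
    | zero => rw [ha]; exact one_ne_zero
    | succ k ih =>
      intro h0
      have := hrec k
      rw [h0, mul_zero] at this
      exact mul_ne_zero (sub_ne_zero.2 (hne k).symm) ih this.symm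
  obtain ⟨N, hN⟩ := exists_nat_ge (|χ| + 1)
  have hge : ∀ k : ℕ, N ≤ k → |χ| + 1 ≤ (k : ℝ) := fun k hk =>
    hN.trans (by exact_mod_cast hk)
  set A : ℕ → ℝ := fun k => a N * a k with hA
  have hApos : ∀ k, N ≤ k → 0 < A k := by
    intro k hk
    induction k, hk using Nat.le_induction with
    | base => exact mul_self_pos.2 (hane N)
    | succ k hk ih =>
      have h1 := hge k hk
      have h2 : 0 < k * (k + 2 * α + 1) - χ := by
        have := le_abs_self χ
        have := abs_nonneg χ
        nlinarith [mul_nonneg (Nat.cast_nonneg (α := ℝ) k) hα]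
      have h3 : 2 * (k + 1) * (k + α + 1) * A (k + 1) = (k * (k + 2 * α + 1) - χ) * A k := by
        simp only [hA]; linear_combination a N * hrec k
      have h4 : 0 < 2 * ((k : ℝ) + 1) * (k + α + 1) * A (k + 1) := by
        rw [h3]; exact mul_pos h2 ih
      exact (pos_iff_pos_of_mul_pos h4).1 (by positivity)
  have hlow : ∀ k, N ≤ k → (N : ℝ) ^ 2 * 2 ^ N * A N ≤ (k : ℝ) ^ 2 * 2 ^ k * A k := by
    intro k hk
    induction k, hk using Nat.le_induction with
    | base => exact le_rfl
    | succ k hk ih =>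
      refine ih.trans ?_
      have h1 := hge k hk
      have h3 : 2 * (k + 1) * (k + α + 1) * A (k + 1) = (k * (k + 2 * α + 1) - χ) * A k := by
        simp only [hA]; linear_combination a N * hrec k
      have h4 : (k : ℝ) ^ 2 * (k + α + 1) ≤ (k + 1) * (k * (k + 2 * α + 1) - χ) := by
        have := le_abs_self χ
        have := abs_nonneg χ
        have hk0 : (0 : ℝ) ≤ k := Nat.cast_nonneg k
        have h5 : 0 ≤ α * k := by positivity
        have h6 : 0 ≤ α * k ^ 2 := by positivity
        have h7 : (|χ| + 1) * k ≤ k * k := by gcongr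
        have h8 : χ * k ≤ |χ| * k := by gcongr
        nlinarith
      have h5 := hApos k hk
      have h6 : (0 : ℝ) < k + α + 1 := by positivity
      push_cast
      refine le_of_mul_le_mul_right ?_ h6
      calc (k : ℝ) ^ 2 * 2 ^ k * A k * (k + α + 1)
          = ((k : ℝ) ^ 2 * (k + α + 1)) * (2 ^ k * A k) := by ring
        _ ≤ ((k + 1) * (k * (k + 2 * α + 1) - χ)) * (2 ^ k * A k) := by gcongr
        _ = _ := by rw [pow_succ 2 k]; linear_combination -(k + 1 : ℝ) * 2 ^ k * h3
  set C := (N : ℝ) ^ 2 * 2 ^ N * A N with hC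
  have hC0 : 0 < C := by
    have := hApos N le_rfl
    have : (0 : ℝ) < N := by linarith [hge N le_rfl, abs_nonneg χ]
    positivity
  obtain ⟨σ, hσ, hs⟩ := exists_reg_symm hα' h
  obtain ⟨M, hM⟩ := exists_bound_reg hα' (χ, 0)
  have hbd : ∀ t ∈ Ico (1 : ℝ) 2, a N * reg' α (χ, 0) t ≤ |a N| * M := by
    intro t ht
    have h1 := (hs (2 - t) ⟨by linarith [ht.2], by linarith [ht.1]⟩).2
    rw [sub_sub_cancel] at h1
    refine (le_abs_self _).trans ?_
    rw [abs_mul, h1, abs_mul, abs_neg, hσ, one_mul]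
    gcongr
    exact (hM (2 - t) ⟨by linarith [ht.2], by linarith [ht.1]⟩).2
  have hpart : ∀ n, N ≤ n → ∀ t ∈ Ico (1 : ℝ) 2,
      ∑ k ∈ Finset.range n, (k + 1) * A (k + 1) * t ^ k ≤ |a N| * M := by
    intro n hn t ht
    have hsum := ((radiusTwo_regCoeff hα' (isCompact_singleton (x := (χ, (0 : ℝ))))).derivCoeff.hasSum
      rfl (t := t) (abs_lt.2 ⟨by linarith [ht.1], ht.2⟩)).mul_left (a N)
    refine le_trans ?_ (hbd t ht)
    refine le_trans (le_of_eq ?_) (sum_le_hasSum (Finset.range n) (fun k hk => ?_) hsum)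
    · refine Finset.sum_congr rfl fun k _ => ?_
      simp only [hA, derivCoeff]; ring
    · have h1 := hApos (k + 1) (by simp at hk; omega)
      have h2 : 0 ≤ t := by linarith [ht.1]
      calc (0 : ℝ) ≤ (k + 1) * A (k + 1) * t ^ k := by positivity
        _ = _ := by simp only [hA, derivCoeff]; ring
  have hpart2 : ∀ n, N ≤ n → ∑ k ∈ Finset.range n, (k + 1) * A (k + 1) * 2 ^ k ≤ |a N| * M := by
    intro n hn
    have hc : Continuous fun t : ℝ => ∑ k ∈ Finset.range n, (k + 1) * A (k + 1) * t ^ k := by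
      fun_prop
    refine le_of_tendsto ((hc.tendsto 2).mono_left (nhdsWithin_le_nhds (s := Iio 2))) ?_
    filter_upwards [Ico_mem_nhdsLT (one_lt_two (α := ℝ))] with t ht
    exact hpart n hn t ht
  have hH := Real.tendsto_sum_range_one_div_nat_succ_atTop
  set H : ℕ → ℝ := fun n => ∑ i ∈ Finset.range n, (1 / (i + 1 : ℝ)) with hHdef
  set S : ℕ → ℝ := fun n => ∑ k ∈ Finset.range n, (k + 1) * A (k + 1) * 2 ^ k with hS
  have hSH : ∀ n, N ≤ n → S N + C / 2 * (H n - H N) ≤ S n := by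
    intro n hn
    induction n, hn using Nat.le_induction with
    | base => simp
    | succ n hn ih =>
      have e1 : S (n + 1) = S n + (n + 1) * A (n + 1) * 2 ^ n := Finset.sum_range_succ _ _
      have e2 : H (n + 1) = H n + 1 / (n + 1) := Finset.sum_range_succ _ _
      have h1 := hlow (n + 1) (by omega)
      have h2 : C / 2 * (1 / (n + 1)) ≤ (n + 1) * A (n + 1) * 2 ^ n := by
        rw [mul_one_div, div_le_iff₀ (by positivity)]
        push_cast at h1
        rw [pow_succ 2 n] at h1
        nlinarith
      rw [e1, e2]
      linarith
  have hlim : Tendsto (fun n => S N + C / 2 * (H n - H N)) atTop atTop := by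
    refine tendsto_atTop_add_const_left _ _ (Tendsto.const_mul_atTop (by positivity) ?_)
    exact tendsto_atTop_add_const_right _ _ hH
  obtain ⟨n, hn1, hn2⟩ := ((hlim.eventually_gt_atTop (|a N| * M)).and
    (eventually_ge_atTop N)).exists
  exact absurd ((hSH n hn2).trans (hpart2 n hn2)) (not_le.2 hn1)

lemma reg_mul_reg'_eq_zero_iff {α χ : ℝ} (hα : 0 ≤ α) :
    reg α (χ, 0) 1 * reg' α (χ, 0) 1 = 0 ↔ ∃ n : ℕ, χ = n * (n + 2 * α + 1) := by
  refine ⟨exists_eq_of_reg_mul_reg'_eq_zero hα, ?_⟩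
  rintro ⟨n, rfl⟩
  exact (hasBddSol_jacobi (by linarith) n).reg_mul_reg'_eq_zero hα

lemma strictMono_of_eventually_lt_right {f : ℝ → ℝ} (hf : Continuous f)
    (h : ∀ x, ∀ᶠ ε in 𝓝[>] (0 : ℝ), f x < f (x + ε)) : StrictMono f := by
  intro a b hab
  have hlt : ∀ m ∈ Ico a b, ∃ y ∈ Icc a b, f m < f y := by
    intro m hm
    obtain ⟨ε, h1, h2⟩ := ((h m).and (Ioo_mem_nhdsGT (sub_pos.2 hm.2))).exists
    exact ⟨m + ε, ⟨by linarith [hm.1, h2.1], by linarith [h2.2]⟩, h1⟩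
  obtain ⟨m, hm, hmax⟩ := isCompact_Icc.exists_isMaxOn (nonempty_Icc.2 hab.le) hf.continuousOn
  have hmb : m = b := by
    by_contra hne
    obtain ⟨y, hy, hlt'⟩ := hlt m ⟨hm.1, lt_of_le_of_ne hm.2 hne⟩
    exact absurd (hmax hy) (not_le.2 hlt')
  subst hmb
  obtain ⟨y, hy, hlt'⟩ := hlt a ⟨le_rfl, hab⟩
  exact hlt'.trans_le (hmax hy)

lemma continuous_reg_clamp {α : ℝ} (hα : -1 < α) :
    Continuous fun z : ℝ × (ℝ × ℝ) => reg α z.2 (max 0 (min 1 z.1)) := by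
  have h : Continuous fun z : ℝ × (ℝ × ℝ) => (max 0 (min 1 z.1), z.2) := by fun_prop
  exact (continuousOn_reg hα).comp_continuous h
    fun z => ⟨⟨le_max_left _ _, max_le zero_le_one (min_le_left _ _)⟩, mem_univ _⟩

lemma continuous_reg_one {α : ℝ} (hα : -1 < α) : Continuous fun p => reg α p 1 :=
  (continuousOn_reg hα).comp_continuous (f := fun p : ℝ × ℝ => ((1 : ℝ), p)) (by fun_prop)
    fun p => ⟨⟨zero_le_one, le_rfl⟩, mem_univ _⟩

lemma continuous_reg'_one {α : ℝ} (hα : -1 < α) : Continuous fun p => reg' α p 1 :=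
  (continuousOn_reg' hα).comp_continuous (f := fun p : ℝ × ℝ => ((1 : ℝ), p)) (by fun_prop)
    fun p => ⟨⟨zero_le_one, le_rfl⟩, mem_univ _⟩

lemma integral_wronskian {α : ℝ} (hα : 0 ≤ α) (p q : ℝ × ℝ) :
    reg' α p 1 * reg α q 1 - reg α p 1 * reg' α q 1 =
      ∫ t in (0 : ℝ)..1, (t * (2 - t)) ^ α * ((q.1 - p.1) - (q.2 - p.2) * (1 - t) ^ 2) *
        (reg α p t * reg α q t) := by
  have hα' : -1 < α := by linarith
  have habs : ∀ t ∈ Icc (0 : ℝ) 1, |t| < 2 := fun t ht => abs_lt.2 ⟨by linarith [ht.1],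
    by linarith [ht.2]⟩
  have hc : ∀ p, ContinuousOn (reg α p) (Icc 0 1) := fun p t ht =>
    (hasDerivAt_reg hα' p (habs t ht)).continuousAt.continuousWithinAt
  have hc' : ∀ p, ContinuousOn (reg' α p) (Icc 0 1) := fun p t ht =>
    (hasDerivAt_reg' hα' p (habs t ht)).continuousAt.continuousWithinAt
  have hw : ∀ β : ℝ, 0 ≤ β → Continuous fun t : ℝ => (t * (2 - t)) ^ β := fun β hβ =>
    Continuous.rpow_const (by fun_prop) fun _ => Or.inr hβ
  have h1 := hc p
  have h2 := hc q
  have h3 := hc' p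
  have h4 := hc' q
  have h5 := (hw (α + 1) (by linarith)).continuousOn (s := Icc 0 1)
  have h6 := (hw α hα).continuousOn (s := Icc 0 1)
  have := intervalIntegral.integral_eq_sub_of_hasDerivAt_of_le (zero_le_one (α := ℝ))
    (f := fun t : ℝ => (t * (2 - t)) ^ (α + 1) * (reg α p t * reg' α q t - reg' α p t * reg α q t))
    (h5.mul ((h1.mul h4).sub (h3.mul h2)))
    (fun t ht => (isSol_reg hα' p).hasDerivAt_wronskian (isSol_reg hα' q)
      ⟨ht.1, by linarith [ht.2]⟩)
    (by
      refine ContinuousOn.intervalIntegrable ?_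
      rw [uIcc_of_le zero_le_one]
      exact ((h6.mul (by fun_prop)).mul (h1.mul h2)).neg)
  rw [intervalIntegral.integral_neg] at this
  have hz : (0 : ℝ) ^ (α + 1) = 0 := zero_rpow (by linarith)
  norm_num [hz] at this
  linarith

lemma eventually_wronskian_pos {α : ℝ} (hα : 0 ≤ α) (p d : ℝ × ℝ)
    (hd : ∀ t ∈ Ioo (0 : ℝ) 1, 0 < d.1 - d.2 * (1 - t) ^ 2) :
    ∀ᶠ ε in 𝓝[>] (0 : ℝ),
      0 < reg' α p 1 * reg α (p + ε • d) 1 - reg α p 1 * reg' α (p + ε • d) 1 := by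
  have hα' : -1 < α := by linarith
  set κ : ℝ → ℝ := fun t => max 0 (min 1 t) with hκ
  have hκc : Continuous κ := by fun_prop
  have hκI : ∀ t ∈ Icc (0 : ℝ) 1, κ t = t := fun t ht => by
    simp only [hκ]; rw [min_eq_right ht.2, max_eq_right ht.1]
  set F : ℝ → ℝ → ℝ := fun ε t => (κ t * (2 - κ t)) ^ α * (d.1 - d.2 * (1 - κ t) ^ 2) *
        (reg α p (κ t) * reg α (p + ε • d) (κ t)) with hF
  have hFc : Continuous (Function.uncurry F) := by
    have h1 : Continuous fun z : ℝ × ℝ => (κ z.2 * (2 - κ z.2)) ^ α :=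
      Continuous.rpow_const (by fun_prop) fun _ => Or.inr hα
    have h2 : Continuous fun z : ℝ × ℝ => reg α p (κ z.2) :=
      (continuous_reg_clamp hα').comp (g := fun z : ℝ × (ℝ × ℝ) => reg α z.2 (κ z.1))
        (f := fun z : ℝ × ℝ => (z.2, p)) (by fun_prop)
    have h3 : Continuous fun z : ℝ × ℝ => reg α (p + z.1 • d) (κ z.2) :=
      (continuous_reg_clamp hα').comp (g := fun z : ℝ × (ℝ × ℝ) => reg α z.2 (κ z.1))
        (f := fun z : ℝ × ℝ => (z.2, p + z.1 • d)) (by fun_prop)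
    exact (h1.mul (by fun_prop)).mul (h2.mul h3)
  have hJc : Continuous fun ε => ∫ t in (0 : ℝ)..1, F ε t :=
    intervalIntegral.continuous_parametric_intervalIntegral_of_continuous' hFc 0 1
  have hJ0 : 0 < ∫ t in (0 : ℝ)..1, F 0 t := by
    have hnn : ∀ t ∈ Ioc (0 : ℝ) 1, 0 ≤ F 0 t := by
      intro t ht
      have ht' := hκI t ⟨ht.1.le, ht.2⟩
      have h1 : 0 ≤ d.1 - d.2 * (1 - t) ^ 2 := by
        have hcl : t ∈ closure (Ioo (0 : ℝ) 1) := by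
          rw [closure_Ioo zero_ne_one]; exact ⟨ht.1.le, ht.2⟩
        have hcc : Continuous fun t : ℝ => d.1 - d.2 * (1 - t) ^ 2 := by fun_prop
        exact closure_minimal (fun t ht => (hd t ht).le)
          (isClosed_le continuous_const hcc) hcl
      have h2 : 0 ≤ t * (2 - t) := mul_nonneg ht.1.le (by linarith [ht.2])
      simp only [hF, ht', zero_smul, add_zero]
      exact mul_nonneg (mul_nonneg (by positivity) h1) (mul_self_nonneg _)
    have hc0 : Continuous (F 0) := hFc.comp (f := fun t : ℝ => ((0 : ℝ), t)) (by fun_prop)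
    obtain ⟨t, ht, hne⟩ : ∃ t ∈ Ioo (0 : ℝ) 1, reg α p t ≠ 0 := by
      have hcu : ContinuousAt (reg α p) 0 := (hasDerivAt_reg hα' p (by norm_num)).continuousAt
      have h1 : ∀ᶠ t in 𝓝[>] (0 : ℝ), reg α p t ≠ 0 :=
        (hcu.eventually_ne (by rw [reg_zero]; norm_num)).filter_mono nhdsWithin_le_nhds
      obtain ⟨t, ht, ht'⟩ := (h1.and (Ioo_mem_nhdsGT one_pos)).exists
      exact ⟨t, ht', ht⟩
    refine intervalIntegral.integral_pos zero_lt_one hc0.continuousOn hnn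
      ⟨t, ⟨ht.1.le, ht.2.le⟩, ?_⟩
    have h2 : 0 < t * (2 - t) := mul_pos ht.1 (by linarith [ht.2])
    simp only [hF, hκI t ⟨ht.1.le, ht.2.le⟩, zero_smul, add_zero]
    exact mul_pos (mul_pos (by positivity) (hd t ht)) (mul_self_pos.2 hne)
  have hev : ∀ᶠ ε in 𝓝[>] (0 : ℝ), 0 < ∫ t in (0 : ℝ)..1, F ε t :=
    ((hJc.tendsto 0).eventually_const_lt hJ0).filter_mono nhdsWithin_le_nhds
  filter_upwards [hev, self_mem_nhdsWithin] with ε hε hε0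
  rw [integral_wronskian hα]
  have : ∫ t in (0 : ℝ)..1, (t * (2 - t)) ^ α *
        (((p + ε • d).1 - p.1) - ((p + ε • d).2 - p.2) * (1 - t) ^ 2) *
        (reg α p t * reg α (p + ε • d) t) = ε * ∫ t in (0 : ℝ)..1, F ε t := by
    rw [← intervalIntegral.integral_const_mul]
    refine intervalIntegral.integral_congr fun t ht => ?_
    rw [uIcc_of_le zero_le_one] at ht
    simp only [hF, hκI t ht, Prod.fst_add, Prod.snd_add, Prod.smul_fst, Prod.smul_snd,
      smul_eq_mul]
    ring
  rw [this]
  exact mul_pos hε0 hε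

/-- A continuous choice of polar angle of the Cauchy data at `x = 0` of the solution regular
at `x = 1`. -/
lemma exists_angle {α : ℝ} (hα : -1 < α) :
    ∃ θ r : ℝ × ℝ → ℝ, Continuous θ ∧ (∀ p, 0 < r p) ∧
      (∀ p, reg α p 1 = r p * cos (θ p)) ∧ ∀ p, -reg' α p 1 = r p * sin (θ p) := by
  set Z : C(ℝ × ℝ, ℂ) := ⟨fun p => (reg α p 1 : ℂ) + ((-reg' α p 1 : ℝ) : ℂ) * Complex.I, by
    have h1 := continuous_reg_one hα
    have h2 := continuous_reg'_one hα
    fun_prop⟩ with hZ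
  have hne : ∀ p, Z p ≠ 0 := by
    intro p h0
    have h1 := congrArg Complex.re h0
    have h2 := congrArg Complex.im h0
    simp [hZ] at h1 h2
    rcases reg_one_ne_zero_or hα p with h | h <;> contradiction
  obtain ⟨L, ⟨-, hL⟩, -⟩ := Complex.isCoveringMapOn_exp.existsUnique_continuousMap_lifts
    Z (a₀ := (0 : ℝ × ℝ)) (e₀ := Complex.log (Z 0)) (Complex.exp_log (hne 0)) (fun p => hne p)
  have hexp : ∀ p, Complex.exp (L p) = Z p := fun p => congrFun hL p
  refine ⟨fun p => (L p).im, fun p => exp (L p).re, by fun_prop, fun p => exp_pos _, fun p => ?_,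
    fun p => ?_⟩
  · rw [← Complex.exp_re, hexp]; simp [hZ]
  · rw [← Complex.exp_im, hexp]; simp [hZ]

lemma angle_strictMono {α : ℝ} (hα : 0 ≤ α) {θ r : ℝ × ℝ → ℝ} (hθ : Continuous θ)
    (hr : ∀ p, 0 < r p) (hcos : ∀ p, reg α p 1 = r p * cos (θ p))
    (hsin : ∀ p, -reg' α p 1 = r p * sin (θ p)) (p d : ℝ × ℝ)
    (hd : ∀ t ∈ Ioo (0 : ℝ) 1, 0 < d.1 - d.2 * (1 - t) ^ 2) :
    StrictMono fun τ : ℝ => θ (p + τ • d) := by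
  refine strictMono_of_eventually_lt_right (by fun_prop) fun τ => ?_
  have hc : Continuous fun ε : ℝ => θ (p + τ • d + ε • d) - θ (p + τ • d) := by fun_prop
  have h1 : ∀ᶠ ε in 𝓝[>] (0 : ℝ), -π < θ (p + τ • d + ε • d) - θ (p + τ • d) := by
    refine ((hc.tendsto 0).eventually_const_lt ?_).filter_mono nhdsWithin_le_nhds
    simp [pi_pos]
  filter_upwards [h1, eventually_wronskian_pos hα (p + τ • d) d hd] with ε hε hW
  rw [add_smul, ← add_assoc]
  have h2 : reg' α (p + τ • d) 1 * reg α (p + τ • d + ε • d) 1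
      - reg α (p + τ • d) 1 * reg' α (p + τ • d + ε • d) 1 =
      r (p + τ • d) * r (p + τ • d + ε • d) *
        sin (θ (p + τ • d + ε • d) - θ (p + τ • d)) := by
    rw [sin_sub]
    have e1 := hsin (p + τ • d)
    have e2 := hsin (p + τ • d + ε • d)
    rw [hcos, hcos, neg_eq_iff_eq_neg.1 e1, neg_eq_iff_eq_neg.1 e2]
    ring
  rw [h2] at hW
  have hs : 0 < sin (θ (p + τ • d + ε • d) - θ (p + τ • d)) :=
    (pos_iff_pos_of_mul_pos hW).1 (mul_pos (hr _) (hr _))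
  by_contra! hle
  exact absurd hs (not_lt.2 (sin_nonpos_of_nonpos_of_neg_pi_le (by linarith) hε.le))

/-- A continuous strictly increasing function which takes integer values exactly along a
sequence takes consecutive integer values along it. -/
lemma apply_eq_add_of_int_iff {g : ℝ → ℝ} (hg : Continuous g) (hmono : StrictMono g)
    {d : ℕ → ℝ} (hd : StrictMono d) (hiff : ∀ x, (∃ k : ℤ, g x = k) ↔ ∃ n, x = d n) :
    (∀ n : ℕ, g (d n) = g (d 0) + n) ∧ ∀ x, g (d 0) - 1 < g x := by
  choose k hk using fun n => (hiff (d n)).2 ⟨n, rfl⟩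
  have hkm : StrictMono k := fun a b hab => by
    have := hmono (hd hab)
    rw [hk, hk] at this
    exact_mod_cast this
  have hlow : ∀ x, g (d 0) - 1 < g x := by
    intro x
    by_contra! hx
    have hmem : g (d 0) - 1 ∈ Icc (g x) (g (d 0)) := ⟨hx, by linarith⟩
    obtain ⟨y, hy⟩ := mem_range_of_exists_le_of_exists_ge hg ⟨x, hmem.1⟩ ⟨d 0, hmem.2⟩
    obtain ⟨m, hm⟩ := (hiff y).1 ⟨k 0 - 1, by rw [hy, hk]; push_cast; ring⟩
    have := hmono.monotone (hd.monotone (Nat.zero_le m))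
    rw [← hm] at this
    linarith
  have hstep : ∀ n, k (n + 1) = k n + 1 := by
    intro n
    have h1 : k n + 1 ≤ k (n + 1) := hkm n.lt_succ_self
    have h2 : ((k n + 1 : ℤ) : ℝ) ≤ g (d (n + 1)) := by rw [hk]; exact_mod_cast h1
    obtain ⟨y, hy⟩ := mem_range_of_exists_le_of_exists_ge hg
      ⟨d n, by rw [hk]; exact_mod_cast (lt_add_one (k n)).le⟩ ⟨d (n + 1), h2⟩
    obtain ⟨m, hm⟩ := (hiff y).1 ⟨_, hy⟩
    have h3 : k m = k n + 1 := by
      rw [hm, hk] at hy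
      exact_mod_cast hy
    have h4 : n < m := hkm.lt_iff_lt.1 (by omega)
    have h5 : k (n + 1) ≤ k m := hkm.monotone h4
    omega
  refine ⟨fun n => ?_, hlow⟩
  induction n with
  | zero => simp
  | succ n ih =>
    have := hk (n + 1)
    rw [hstep] at this
    push_cast at this ⊢
    linarith [hk n]

lemma strictMono_jacobi_eigenvalue {α : ℝ} (hα : 0 ≤ α) :
    StrictMono fun n : ℕ => (n : ℝ) * (n + 2 * α + 1) := by
  refine strictMono_nat_of_lt_succ fun n => ?_
  push_cast
  nlinarith [(n.cast_nonneg : (0 : ℝ) ≤ n)]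

/-- A continuous function on the `(χ, c²)` plane which is an integer exactly at the
eigenvalues, increasing in `χ`, decreasing in `c²` and increasing along the diagonal. -/
lemma exists_index {α : ℝ} (hα : 0 ≤ α) :
    ∃ Φ : ℝ × ℝ → ℝ, Continuous Φ ∧
      (∀ p, (∃ k : ℤ, Φ p = k) ↔ reg α p 1 * reg' α p 1 = 0) ∧
      (∀ s, StrictMono fun x => Φ (x, s)) ∧
      (∀ x s, 0 ≤ s → Φ (x, s) ≤ Φ (x, 0)) ∧
      ∀ x s, 0 ≤ s → Φ (x, 0) ≤ Φ (x + s, s) := by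
  obtain ⟨θ, r, hθ, hr, hcos, hsin⟩ := exists_angle (by linarith : -1 < α)
  have hm := angle_strictMono hα hθ hr hcos hsin
  have hpi := pi_pos
  have hle : ∀ p q, θ p ≤ θ q → 2 * θ p / π ≤ 2 * θ q / π := fun p q h => by gcongr
  refine ⟨fun p => 2 * θ p / π, by fun_prop, fun p => ?_, fun s a b hab => ?_,
    fun x s hs => hle _ _ ?_, fun x s hs => hle _ _ ?_⟩
  · have h1 : reg α p 1 * reg' α p 1 = -(r p ^ 2 / 2) * sin (2 * θ p) := by
      rw [hcos, neg_eq_iff_eq_neg.1 (hsin p), sin_two_mul]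
      ring
    have h2 : -(r p ^ 2 / 2) ≠ 0 := by have := hr p; simp [this.ne']
    rw [h1, mul_eq_zero, or_iff_right h2, sin_eq_zero_iff]
    refine exists_congr fun k => ?_
    rw [div_eq_iff hpi.ne', eq_comm]
  · have := hm (0, s) (1, 0) (by simp) hab
    simp at this
    simp only
    gcongr
  · have := (hm (x, s) (0, -1) (fun t ht => by
      have : 0 < 1 - t := by linarith [ht.2]
      simp only; nlinarith)).monotone hs
    simpa using this
  · have := (hm (x, 0) (1, 1) (fun t ht => by
      simp only; nlinarith [ht.1, ht.2])).monotone hs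
    simpa using this

lemma eigenvalue_bounds {c α : ℝ} (hα : 0 ≤ α) {χ : ℕ → ℝ} (hmono : StrictMono χ)
    (hrange : Set.range χ = {μ : ℝ | IsGPSWFEigenvalue c α μ}) (n : ℕ) :
    (n : ℝ) * (n + 2 * α + 1) ≤ χ n ∧ χ n ≤ (n : ℝ) * (n + 2 * α + 1) + c ^ 2 := by
  obtain ⟨Φ, hΦ, hiff, hx, hs, hdiag⟩ := exists_index hα
  have hc := sq_nonneg c
  set d : ℕ → ℝ := fun n => (n : ℝ) * (n + 2 * α + 1) with hd
  have hc0 : ∀ s, Continuous fun x => Φ (x, s) := fun s => by fun_prop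
  obtain ⟨h1, h2⟩ := apply_eq_add_of_int_iff (hc0 0) (hx 0) (strictMono_jacobi_eigenvalue hα)
    fun x => (hiff (x, 0)).trans (reg_mul_reg'_eq_zero_iff hα)
  have hμ : ∀ n, ∃ y ∈ Icc (d n) (d n + c ^ 2), Φ (y, c ^ 2) = Φ (d 0, 0) + n := fun n =>
    intermediate_value_Icc (by linarith) (hc0 (c ^ 2)).continuousOn
      ⟨(hs _ _ hc).trans (h1 n).le, (h1 n).symm.le.trans (hdiag _ _ hc)⟩
  choose μ hμI hμ using hμ
  have hμm : StrictMono μ := fun a b hab => by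
    rw [← (hx (c ^ 2)).lt_iff_lt]
    simp only [hμ]
    gcongr
  obtain ⟨k₀, hk₀⟩ := (hiff (d 0, 0)).2 ((reg_mul_reg'_eq_zero_iff hα).2 ⟨0, rfl⟩)
  have hset : Set.range χ = Set.range μ := by
    rw [hrange]
    ext y
    rw [mem_ofPred_eq, isGPSWFEigenvalue_iff_hasBddSol, hasBddSol_iff hα, ← hiff]
    constructor
    · rintro ⟨k, hk⟩
      have h3 : Φ (d 0, 0) - 1 < Φ (y, c ^ 2) := by
        have := hdiag (y - c ^ 2) (c ^ 2) hc
        rw [sub_add_cancel] at this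
        exact (h2 _).trans_le this
      rw [hk, hk₀] at h3
      have h4 : k₀ - 1 < k := by exact_mod_cast h3
      obtain ⟨m, hm⟩ := Int.eq_ofNat_of_zero_le (by omega : 0 ≤ k - k₀)
      refine ⟨m, (hx (c ^ 2)).injective ?_⟩
      have h5 : k = k₀ + m := by omega
      simp only [hμ, hk, hk₀, h5]
      push_cast
      rfl
    · rintro ⟨m, rfl⟩
      exact ⟨k₀ + m, by rw [hμ, hk₀]; push_cast; rfl⟩
  rw [(hmono.range_inj hμm).1 hset]
  exact hμI n

end

theorem chi_bounds (c α : ℝ) (hc : 0 < c) (hα : -1 < α)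
    (χ : ℕ → ℝ) (hmono : StrictMono χ)
    (hrange : Set.range χ = {μ : ℝ | IsGPSWFEigenvalue c α μ}) (n : ℕ) :
    (n : ℝ) * (n + 2 * α + 1) ≤ χ n ∧ χ n ≤ (n : ℝ) * (n + 2 * α + 1) + c ^ 2 := by
  rcases le_or_gt 0 α with h | h
  · exact eigenvalue_bounds h hmono hrange n
  · have hmem : χ 0 - 1 ∈ Set.range χ := by
      rw [hrange, mem_ofPred_eq, isGPSWFEigenvalue_iff_hasBddSol]
      exact hasBddSol_of_neg hα h _
    obtain ⟨k, hk⟩ := hmem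
    linarith [hmono.monotone (Nat.zero_le k)]
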